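/- Let p, q > 1 and a ≥ 1. Then arsinh_{p,q} is (a,a)-concave on (0,∞): for all r, s > 0, arsinh_{p,q}(((r^a + s^a)/2)^{1/a}) ≥ ((arsinh_{p,q}(r)^a + arsinh_{p,q}(s)^a)/2)^{1/a}. -/

import Mathlib

open Real Set

/-- `arsinhPQ p q x = ∫₀ˣ (1 + tᵠ)^(-1/p) dt`, the generalized inverse hyperbolic sine. -/
noncomputable def arsinhPQ (p q x : ℝ) : ℝ := ∫ t in (0:ℝ)..x, (1 + t ^ q) ^ (-(1/p))

/-!
A nonnegative concave function `f` on `(0, ∞)` is `(a, a)`-concave for every `a ≥ 1`: at the point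
`m = M_a(x, y)` it has a supporting line `t ↦ α + β t`, and nonnegativity of `f` on all of `(0, ∞)`
forces `α, β ≥ 0`. Since `M_a` is monotone, homogeneous and, by Minkowski's inequality, subadditive,
`M_a(f x, f y) ≤ M_a(α + β x, α + β y) ≤ α + β m = f m`.
The function `arsinh_{p,q}` is concave because it is the primitive of a decreasing function.
-/

open Filter MeasureTheory Topology

/-- The power mean `M_a(x, y)` of the nonnegative reals `x` and `y`, for an exponent `a ≠ 0`. -/
noncomputable def powerMean (a x y : ℝ) : ℝ := ((x ^ a + y ^ a) / 2) ^ (1 / a)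

/-- The `(a, b)`-concavity of `f` on `s`: `f` sends the power mean of exponent `a` of two points
of `s` above the power mean of exponent `b` of their images. -/
def PowerMeanConcaveOn (a b : ℝ) (s : Set ℝ) (f : ℝ → ℝ) : Prop :=
  ∀ ⦃x⦄, x ∈ s → ∀ ⦃y⦄, y ∈ s → powerMean b (f x) (f y) ≤ f (powerMean a x y)

section PowerMean

variable {a c x x' y y' : ℝ}

lemma powerMean_pos (hx : 0 < x) (hy : 0 < y) : 0 < powerMean a x y := by
  unfold powerMean
  positivity

lemma powerMean_self (ha : a ≠ 0) (hx : 0 ≤ x) : powerMean a x x = x := by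
  rw [powerMean, add_self_div_two, one_div, rpow_rpow_inv hx ha]

lemma powerMean_mul_left (ha : a ≠ 0) (hc : 0 ≤ c) (hx : 0 ≤ x) (hy : 0 ≤ y) :
    powerMean a (c * x) (c * y) = c * powerMean a x y := by
  rw [powerMean, mul_rpow hc hx, mul_rpow hc hy, ← mul_add, mul_div_assoc,
    mul_rpow (by positivity) (by positivity), one_div, rpow_rpow_inv hc ha, powerMean, one_div]

lemma powerMean_le_powerMean (ha : 0 ≤ a) (hx : 0 ≤ x) (hy : 0 ≤ y) (hxx' : x ≤ x')
    (hyy' : y ≤ y') : powerMean a x y ≤ powerMean a x' y' := by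
  unfold powerMean
  gcongr

lemma powerMean_add_le (ha : 1 ≤ a) (hx : 0 ≤ x) (hx' : 0 ≤ x') (hy : 0 ≤ y) (hy' : 0 ≤ y') :
    powerMean a (x + x') (y + y') ≤ powerMean a x y + powerMean a x' y' := by
  have minkowski := Lp_add_le_of_nonneg (s := Finset.univ) (f := ![x, y]) (g := ![x', y']) ha
    (by simp [Fin.forall_fin_two, hx, hy]) (by simp [Fin.forall_fin_two, hx', hy'])
  simp only [Fin.sum_univ_two, Matrix.cons_val_zero, Matrix.cons_val_one] at minkowski
  simp only [powerMean]
  rw [div_rpow (by positivity) zero_le_two, div_rpow (by positivity) zero_le_two,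
    div_rpow (by positivity) zero_le_two, ← add_div]
  gcongr

end PowerMean

section Concave

variable {f : ℝ → ℝ} {s : Set ℝ}

lemma exists_forall_le_add_mul_sub_of_concaveOn {x : ℝ} (hf : ConcaveOn ℝ s f)
    (hx : x ∈ interior s) : ∃ c, ∀ y ∈ s, f y ≤ f x + c * (y - x) := by
  set d := derivWithin (-f) (Ioi x) x
  refine ⟨-d, fun y hy ↦ ?_⟩
  rcases lt_trichotomy y x with hyx | rfl | hxy
  · have hslope : slope (-f) x y ≤ d := by
      rw [slope_comm]
      exact (hf.neg.slope_le_leftDeriv_of_mem_interior hy hx hyx).trans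
        (hf.neg.leftDeriv_le_rightDeriv_of_mem_interior hx)
    rw [slope_def_field, div_le_iff_of_neg (sub_neg.2 hyx), Pi.neg_apply, Pi.neg_apply] at hslope
    linarith
  · simp
  · have hslope : d ≤ slope (-f) x y := hf.neg.rightDeriv_le_slope_of_mem_interior hx hy hxy
    rw [slope_def_field, le_div_iff₀ (sub_pos.2 hxy), Pi.neg_apply, Pi.neg_apply] at hslope
    linarith

lemma nonneg_of_forall_pos_add_mul_nonneg {α β : ℝ} (h : ∀ t > 0, 0 ≤ α + β * t) : 0 ≤ α := by
  have hlim : Tendsto (fun t ↦ α + β * t) (𝓝[>] 0) (𝓝 α) := by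
    have hcont : Continuous fun t ↦ α + β * t := by fun_prop
    simpa using hcont.continuousWithinAt.tendsto (x := 0)
  exact ge_of_tendsto hlim (eventually_mem_nhdsWithin.mono h)

lemma exists_nonneg_affine_majorant_of_concaveOn {m : ℝ} (hf : ConcaveOn ℝ (Ioi 0) f)
    (hf₀ : ∀ t > 0, 0 ≤ f t) (hm : 0 < m) :
    ∃ α ≥ 0, ∃ β ≥ 0, f m = α + β * m ∧ ∀ t > 0, f t ≤ α + β * t := by
  obtain ⟨β, hβ⟩ := exists_forall_le_add_mul_sub_of_concaveOn hf (by simpa using hm)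
  have hmajorant (t : ℝ) (ht : 0 < t) : f t ≤ (f m - β * m) + β * t :=
    (hβ t ht).trans_eq (by ring)
  have hnonneg (t : ℝ) (ht : 0 < t) : 0 ≤ (f m - β * m) + β * t :=
    (hf₀ t ht).trans (hmajorant t ht)
  -- The slope of a line becomes its intercept under `t ↦ t⁻¹`.
  have hinv (t : ℝ) (ht : 0 < t) : 0 ≤ β + (f m - β * m) * t := by
    have := mul_nonneg ht.le (hnonneg t⁻¹ (inv_pos.2 ht))
    field_simp at this
    linarith
  exact ⟨f m - β * m, nonneg_of_forall_pos_add_mul_nonneg hnonneg,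
    β, nonneg_of_forall_pos_add_mul_nonneg hinv, by ring, hmajorant⟩

theorem powerMeanConcaveOn_of_concaveOn_of_nonneg {a : ℝ} (ha : 1 ≤ a) (hf : ConcaveOn ℝ (Ioi 0) f)
    (hf₀ : ∀ t > 0, 0 ≤ f t) : PowerMeanConcaveOn a a (Ioi 0) f := by
  intro x (hx : 0 < x) y (hy : 0 < y)
  have ha₀ : 0 < a := by positivity
  obtain ⟨α, hα, β, hβ, hm, hmajorant⟩ :=
    exists_nonneg_affine_majorant_of_concaveOn hf hf₀ (powerMean_pos (a := a) hx hy)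
  calc powerMean a (f x) (f y)
      ≤ powerMean a (α + β * x) (α + β * y) :=
        powerMean_le_powerMean ha₀.le (hf₀ x hx) (hf₀ y hy) (hmajorant x hx) (hmajorant y hy)
    _ ≤ powerMean a α α + powerMean a (β * x) (β * y) :=
        powerMean_add_le ha hα (by positivity) hα (by positivity)
    _ = α + β * powerMean a x y := by
        rw [powerMean_self ha₀.ne' hα, powerMean_mul_left ha₀.ne' hβ hx.le hy.le]
    _ = f (powerMean a x y) := hm.symm

theorem concaveOn_intervalIntegral_of_antitoneOn {g : ℝ → ℝ} {c : ℝ} (hs : s.OrdConnected)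
    (hc : c ∈ s) (hg : AntitoneOn g s) : ConcaveOn ℝ s fun x ↦ ∫ t in c..x, g t := by
  have hint {u v : ℝ} (hu : u ∈ s) (hv : v ∈ s) : IntervalIntegrable g volume u v :=
    (hg.mono (hs.uIcc_subset hu hv)).intervalIntegrable
  refine concaveOn_of_slope_anti_adjacent hs.convex fun {x y z} hx hz hxy hyz ↦ ?_
  have hy : y ∈ s := hs.out hx hz ⟨hxy.le, hyz.le⟩
  have hright : ∫ t in y..z, g t ≤ g y * (z - y) := calc
    ∫ t in y..z, g t ≤ ∫ _ in y..z, g y :=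
      intervalIntegral.integral_mono_on hyz.le (hint hy hz) intervalIntegrable_const
        fun t ht ↦ hg hy (hs.out hy hz ht) ht.1
    _ = g y * (z - y) := by simp [mul_comm]
  have hleft : g y * (y - x) ≤ ∫ t in x..y, g t := calc
    g y * (y - x) = ∫ _ in x..y, g y := by simp [mul_comm]
    _ ≤ ∫ t in x..y, g t :=
      intervalIntegral.integral_mono_on hxy.le intervalIntegrable_const (hint hx hy)
        fun t ht ↦ hg (hs.out hx hy ht) hy ht.2
  rw [intervalIntegral.integral_interval_sub_left (hint hc hz) (hint hc hy),
    intervalIntegral.integral_interval_sub_left (hint hc hy) (hint hc hx)]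
  exact ((div_le_iff₀ (sub_pos.2 hyz)).2 hright).trans ((le_div_iff₀ (sub_pos.2 hxy)).2 hleft)

end Concave

section ArsinhPQ

variable {p q : ℝ}

lemma antitoneOn_one_add_rpow_rpow_neg_one_div (hp : 0 < p) (hq : 0 ≤ q) :
    AntitoneOn (fun t : ℝ ↦ (1 + t ^ q) ^ (-(1 / p))) (Ici 0) := by
  intro x (hx : 0 ≤ x) y _ hxy
  exact rpow_le_rpow_of_nonpos (by positivity) (by gcongr) (by simpa using hp.le)

lemma arsinhPQ_nonneg (p q : ℝ) {x : ℝ} (hx : 0 ≤ x) : 0 ≤ arsinhPQ p q x :=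
  intervalIntegral.integral_nonneg hx fun t ht ↦ by
    have := ht.1
    positivity

lemma concaveOn_arsinhPQ (hp : 0 < p) (hq : 0 ≤ q) : ConcaveOn ℝ (Ici 0) (arsinhPQ p q) :=
  concaveOn_intervalIntegral_of_antitoneOn ordConnected_Ici self_mem_Ici
    (antitoneOn_one_add_rpow_rpow_neg_one_div hp hq)

theorem arsinhPQ_aa_concave_general {a : ℝ} (hp : 0 < p) (hq : 0 ≤ q) (ha : 1 ≤ a) :
    PowerMeanConcaveOn a a (Ioi 0) (arsinhPQ p q) :=
  powerMeanConcaveOn_of_concaveOn_of_nonneg ha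
    ((concaveOn_arsinhPQ hp hq).subset Ioi_subset_Ici_self (convex_Ioi 0))
    fun _ ht ↦ arsinhPQ_nonneg p q ht.le

end ArsinhPQ

theorem arsinhPQ_aa_concave (p q a : ℝ) (hp : 1 < p) (hq : 1 < q) (ha : 1 ≤ a)
    (r s : ℝ) (hr : 0 < r) (hs : 0 < s) :
    arsinhPQ p q (((r ^ a + s ^ a) / 2) ^ (1/a)) ≥
      ((arsinhPQ p q r ^ a + arsinhPQ p q s ^ a) / 2) ^ (1/a) :=
  arsinhPQ_aa_concave_general (by positivity) (by positivity) ha hr hs
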